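/- arXiv:1007.4870 — 2 statements merged into one kernel-verified Lean document; each statement's English description precedes it below -/
import Mathlib

section
/- Let a, b, c be strictly positive real constants such that none of them is greater than the sum of the other two (so there is a triangle with side lengths a, b, c), and let α ∈ [0, π] be the angle of this triangle between the sides of lengths b and c, i.e. α = arccos((b² + c² − a²)/(2bc)). If U and V are independent random unit vectors uniformly distributed on the unit circle of ℝ², then Pr(a > ‖bU + cV‖) = α/π. -/
open MeasureTheory ProbabilityTheory
open scoped ENNReal

/-- The unit vector in the plane with direction angle `θ`. -/
noncomputable def stepVec (θ : ℝ) : EuclideanSpace ℝ (Fin 2) :=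
  (WithLp.equiv 2 (Fin 2 → ℝ)).symm ![Real.cos θ, Real.sin θ]

/-- The uniform probability distribution on the unit circle of the plane. -/
noncomputable def uniformCircle : Measure (EuclideanSpace ℝ (Fin 2)) :=
  Measure.map stepVec
    ((ENNReal.ofReal (2 * Real.pi))⁻¹ • volume.restrict (Set.Ioc 0 (2 * Real.pi)))

/-- The distribution of `n ⊙ X`: the distance from the origin after `n` independent
steps whose lengths are i.i.d. with law `μ` and whose directions are i.i.d. uniform
on the unit circle, all independent. -/
noncomputable def walkDist (μ : Measure ℝ) (n : ℕ) : Measure ℝ :=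
  Measure.map
    (fun p : (Fin n → ℝ) × (Fin n → EuclideanSpace ℝ (Fin 2)) => ‖∑ i, p.1 i • p.2 i‖)
    ((Measure.pi fun _ => μ).prod (Measure.pi fun _ => uniformCircle))

/-!
Fix the first direction `u`. By the law of cosines, `‖b • u + c • v‖ < a` says exactly that the unit
vector `v` makes an angle smaller than `α` with `-u`. These `v` form an arc of length `2 * α`, so
the conditional probability given `u` is `2 * α / (2 * π)`, whatever the law of `u`.
-/

open scoped InnerProductSpace

section LawOfCosines

variable {a b c : ℝ}

lemma norm_smul_add_smul_lt_iff_lt_inner_neg {E : Type*} [NormedAddCommGroup E]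
    [InnerProductSpace ℝ E] {u v : E} {k : ℝ} (hu : ‖u‖ = 1) (hv : ‖v‖ = 1) (ha : 0 ≤ a)
    (hbc : 0 < b * c) (hk : a ^ 2 = b ^ 2 + c ^ 2 - 2 * b * c * k) :
    ‖b • u + c • v‖ < a ↔ k < ⟪-u, v⟫_ℝ := by
  have norm_sq : ‖b • u + c • v‖ ^ 2 = b ^ 2 + c ^ 2 + 2 * b * c * ⟪u, v⟫_ℝ := by
    rw [norm_add_sq_real, real_inner_smul_left, real_inner_smul_right, norm_smul, norm_smul,
      hu, hv, mul_one, mul_one, Real.norm_eq_abs, Real.norm_eq_abs, sq_abs, sq_abs]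
    ring
  rw [← sq_lt_sq₀ (norm_nonneg _) ha, norm_sq, hk, inner_neg_left,
    ← mul_lt_mul_iff_right₀ (mul_pos two_pos hbc) (b := k)]
  constructor <;> intro h <;> linarith

lemma law_cos_of_triangle_inequalities (hb : 0 < b) (hc : 0 < c) (habc : a ≤ b + c)
    (hbac : b ≤ a + c) (hcab : c ≤ a + b) :
    a ^ 2 = b ^ 2 + c ^ 2
      - 2 * b * c * Real.cos (Real.arccos ((b ^ 2 + c ^ 2 - a ^ 2) / (2 * b * c))) := by
  have hbc : 0 < 2 * b * c := by positivity
  have sq_le_add_sq : a ^ 2 ≤ (b + c) ^ 2 := sq_le_sq' (by linarith) habc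
  have sub_sq_le_sq : (b - c) ^ 2 ≤ a ^ 2 := sq_le_sq' (by linarith) (by linarith)
  have neg_one_le : -1 ≤ (b ^ 2 + c ^ 2 - a ^ 2) / (2 * b * c) := by
    rw [le_div_iff₀ hbc]
    linarith
  have le_one : (b ^ 2 + c ^ 2 - a ^ 2) / (2 * b * c) ≤ 1 := by
    rw [div_le_iff₀ hbc]
    linarith
  rw [Real.cos_arccos neg_one_le le_one, mul_div_cancel₀ _ hbc.ne']
  ring

end LawOfCosines

section Arc

lemma volume_setOf_inter_Ioc_eq_of_periodic {p : ℝ → Prop} {T : ℝ} (hp : Function.Periodic p T)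
    (hT : 0 < T) (hmeas : MeasurableSet {x | p x}) (s t : ℝ) :
    volume ({x | p x} ∩ Set.Ioc s (s + T)) = volume ({x | p x} ∩ Set.Ioc t (t + T)) :=
  (isAddFundamentalDomain_Ioc hT s).measure_set_eq (isAddFundamentalDomain_Ioc hT t) hmeas
    fun g => Set.ext fun x => iff_of_eq (hp.map_vadd_zmultiples g x)

lemma cos_lt_cos_iff_abs_lt {α x : ℝ} (hα : α ∈ Set.Icc 0 Real.pi) (hx : |x| ≤ Real.pi) :
    Real.cos α < Real.cos x ↔ |x| < α := by
  rw [← Real.cos_abs x]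
  exact Real.strictAntiOn_cos.lt_iff_gt hα ⟨abs_nonneg x, hx⟩

lemma volume_setOf_cos_lt_cos_sub {α : ℝ} (hα : α ∈ Set.Icc 0 Real.pi) (θ : ℝ) :
    volume ({φ | Real.cos α < Real.cos (φ - θ)} ∩ Set.Ioc 0 (2 * Real.pi)) =
      ENNReal.ofReal (2 * α) := by
  have periodic : Function.Periodic (fun φ => Real.cos α < Real.cos (φ - θ)) (2 * Real.pi) :=
    fun φ => by simp only [add_sub_right_comm, Real.cos_add_two_pi]
  have measurable : MeasurableSet {φ | Real.cos α < Real.cos (φ - θ)} :=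
    measurableSet_lt (by fun_prop) (by fun_prop)
  have arc_eq_ball : {φ | Real.cos α < Real.cos (φ - θ)} ∩
      Set.Ioc (θ - Real.pi) (θ - Real.pi + 2 * Real.pi) = Metric.ball θ α := by
    ext φ
    have cos_lt_iff := cos_lt_cos_iff_abs_lt hα (x := φ - θ)
    simp only [Set.mem_inter_iff, Set.mem_ofPred_eq, Set.mem_Ioc, Metric.mem_ball, Real.dist_eq]
    constructor
    · rintro ⟨hcos, hleft, hright⟩
      exact (cos_lt_iff (abs_le.2 ⟨by linarith, by linarith⟩)).1 hcos
    · intro hdist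
      obtain ⟨hleft, hright⟩ := abs_lt.1 (hdist.trans_le hα.2)
      exact ⟨(cos_lt_iff (hdist.le.trans hα.2)).2 hdist, by linarith, by linarith⟩
  have shift := volume_setOf_inter_Ioc_eq_of_periodic periodic Real.two_pi_pos measurable
    0 (θ - Real.pi)
  rw [zero_add] at shift
  rw [shift, arc_eq_ball, Real.volume_ball]

end Arc

section StepVec

lemma continuous_stepVec : Continuous stepVec := by
  refine (PiLp.continuous_toLp 2 _).comp (continuous_pi fun i => ?_)
  fin_cases i
  exacts [Real.continuous_cos, Real.continuous_sin]

lemma inner_stepVec_stepVec (θ φ : ℝ) : ⟪stepVec θ, stepVec φ⟫_ℝ = Real.cos (φ - θ) := by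
  rw [Real.cos_sub]
  simp [stepVec, PiLp.inner_apply, Fin.sum_univ_two]

lemma norm_stepVec (θ : ℝ) : ‖stepVec θ‖ = 1 := by
  rw [norm_eq_sqrt_real_inner, inner_stepVec_stepVec, sub_self, Real.cos_zero, Real.sqrt_one]

lemma exists_stepVec_eq {u : EuclideanSpace ℝ (Fin 2)} (hu : ‖u‖ = 1) : ∃ θ, stepVec θ = u := by
  obtain ⟨θ, hθ⟩ := (Complex.norm_eq_one_iff (Complex.orthonormalBasisOneI.repr.symm u)).1
    (by rw [LinearIsometryEquiv.norm_map, hu])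
  refine ⟨θ, ?_⟩
  rw [← Complex.orthonormalBasisOneI.repr.apply_symm_apply u, ← hθ]
  ext i
  fin_cases i <;> simp [stepVec, Complex.exp_ofReal_mul_I_re, Complex.exp_ofReal_mul_I_im]

end StepVec

section UniformCircle

lemma uniformCircle_apply {s : Set (EuclideanSpace ℝ (Fin 2))} (hs : MeasurableSet s) :
    uniformCircle s = (ENNReal.ofReal (2 * Real.pi))⁻¹ *
      volume (stepVec ⁻¹' s ∩ Set.Ioc 0 (2 * Real.pi)) := by
  have stepVec_measurable := continuous_stepVec.measurable
  rw [uniformCircle, Measure.map_apply stepVec_measurable hs, Measure.smul_apply,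
    Measure.restrict_apply (stepVec_measurable hs), smul_eq_mul]

instance : IsProbabilityMeasure uniformCircle where
  measure_univ := by
    rw [uniformCircle_apply MeasurableSet.univ, Set.preimage_univ, Set.univ_inter,
      Real.volume_Ioc, sub_zero]
    exact ENNReal.inv_mul_cancel (ENNReal.ofReal_pos.2 Real.two_pi_pos).ne' ENNReal.ofReal_ne_top

lemma ae_norm_eq_one_uniformCircle : ∀ᵐ u ∂uniformCircle, ‖u‖ = 1 :=
  (ae_map_iff continuous_stepVec.measurable.aemeasurable
    (measurableSet_eq_fun measurable_norm measurable_const)).2 (.of_forall norm_stepVec)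

lemma uniformCircle_setOf_cos_lt_inner {u : EuclideanSpace ℝ (Fin 2)} (hu : ‖u‖ = 1) {α : ℝ}
    (hα : α ∈ Set.Icc 0 Real.pi) :
    uniformCircle {v | Real.cos α < ⟪u, v⟫_ℝ} = ENNReal.ofReal (α / Real.pi) := by
  obtain ⟨θ, rfl⟩ := exists_stepVec_eq hu
  have preimage_eq : stepVec ⁻¹' {v | Real.cos α < ⟪stepVec θ, v⟫_ℝ} =
      {φ | Real.cos α < Real.cos (φ - θ)} := by
    simp only [Set.preimage_ofPred_eq, inner_stepVec_stepVec]
  rw [uniformCircle_apply (measurableSet_lt (by fun_prop) (by fun_prop)), preimage_eq,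
    volume_setOf_cos_lt_cos_sub hα, ← ENNReal.ofReal_inv_of_pos Real.two_pi_pos,
    ← ENNReal.ofReal_mul (by positivity), inv_mul_eq_div, mul_div_mul_left _ _ two_ne_zero]

lemma uniformCircle_setOf_norm_smul_add_smul_lt {u : EuclideanSpace ℝ (Fin 2)} (hu : ‖u‖ = 1)
    {a b c α : ℝ} (ha : 0 ≤ a) (hbc : 0 < b * c) (hα : α ∈ Set.Icc 0 Real.pi)
    (law_cos : a ^ 2 = b ^ 2 + c ^ 2 - 2 * b * c * Real.cos α) :
    uniformCircle {v | ‖b • u + c • v‖ < a} = ENNReal.ofReal (α / Real.pi) := by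
  rw [← uniformCircle_setOf_cos_lt_inner ((norm_neg u).trans hu) hα]
  refine measure_congr ?_
  filter_upwards [ae_norm_eq_one_uniformCircle] with v hv
  exact propext (norm_smul_add_smul_lt_iff_lt_inner_neg hu hv ha hbc law_cos)

end UniformCircle

theorem stmt_3_general (μ : Measure (EuclideanSpace ℝ (Fin 2))) [IsProbabilityMeasure μ]
    (hμ : ∀ᵐ u ∂μ, ‖u‖ = 1) (a b c : ℝ) (hb : 0 < b) (hc : 0 < c)
    (habc : a ≤ b + c) (hbac : b ≤ a + c) (hcab : c ≤ a + b) :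
    (μ.prod uniformCircle)
        {p : EuclideanSpace ℝ (Fin 2) × EuclideanSpace ℝ (Fin 2) | ‖b • p.1 + c • p.2‖ < a} =
      ENNReal.ofReal (Real.arccos ((b ^ 2 + c ^ 2 - a ^ 2) / (2 * b * c)) / Real.pi) := by
  set α := Real.arccos ((b ^ 2 + c ^ 2 - a ^ 2) / (2 * b * c))
  have hα : α ∈ Set.Icc 0 Real.pi := ⟨Real.arccos_nonneg _, Real.arccos_le_pi _⟩
  have law_cos : a ^ 2 = b ^ 2 + c ^ 2 - 2 * b * c * Real.cos α :=
    law_cos_of_triangle_inequalities hb hc habc hbac hcab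
  have section_measure : ∀ᵐ u ∂μ,
      uniformCircle {v | ‖b • u + c • v‖ < a} = ENNReal.ofReal (α / Real.pi) := by
    filter_upwards [hμ] with u hu
    exact uniformCircle_setOf_norm_smul_add_smul_lt hu (by linarith) (mul_pos hb hc) hα law_cos
  calc (μ.prod uniformCircle) {p | ‖b • p.1 + c • p.2‖ < a}
      = ∫⁻ u, uniformCircle {v | ‖b • u + c • v‖ < a} ∂μ :=
        Measure.prod_apply (measurableSet_lt (by fun_prop) (by fun_prop))
    _ = ∫⁻ _, ENNReal.ofReal (α / Real.pi) ∂μ := lintegral_congr_ae section_measure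
    _ = ENNReal.ofReal (α / Real.pi) := by rw [lintegral_const, measure_univ, mul_one]

theorem stmt_3 (a b c : ℝ) (ha : 0 < a) (hb : 0 < b) (hc : 0 < c)
    (habc : a ≤ b + c) (hbac : b ≤ a + c) (hcab : c ≤ a + b) :
    (uniformCircle.prod uniformCircle)
        {p : EuclideanSpace ℝ (Fin 2) × EuclideanSpace ℝ (Fin 2) | ‖b • p.1 + c • p.2‖ < a} =
      ENNReal.ofReal (Real.arccos ((b ^ 2 + c ^ 2 - a ^ 2) / (2 * b * c)) / Real.pi) :=
  stmt_3_general uniformCircle ae_norm_eq_one_uniformCircle a b c hb hc habc hbac hcab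
end

section
/- Let X be a real random variable taking strictly positive values, let s > 2 be an integer, and for 0 ≤ i ≤ s set p_i = Pr(D_i > D_{s−i}), where D_i and D_{s−i} are independent random variables distributed respectively like i⊙X and (s−i)⊙X. Then for all strictly positive integers i, j with i + j ≤ s, one has p_i + p_j = p_{i+j}. -/
open MeasureTheory ProbabilityTheory
open scoped ENNReal

/-!
Let `A`, `B`, `C` be independent vectors of the plane with rotation-invariant laws that do not
charge the origin. Given the three lengths, the angle between `B` and `-C` is uniform, so by the law
of cosines `‖B + C‖ < ‖A‖` has conditional probability `1 / π` times the angle opposite `‖A‖` in the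
triangle with sides `‖A‖`, `‖B‖`, `‖C‖` (an angle taken to be `0` or `π` when there is no such
triangle). The three angles of a triangle sum to `π`, hence
`Pr(‖A‖ > ‖B + C‖) + Pr(‖B‖ > ‖C + A‖) + Pr(‖C‖ > ‖A + B‖) = 1`.
Taking for `A`, `B`, `C` the sums of `i`, `j` and `s - i - j` steps of the walk gives
`p i + p j = 1 - p (s - i - j)`, and this is `p (i + j)` because ties have probability zero: the
length of a sum of at least two steps has no atom.
-/

section Triangle

open Real InnerProductGeometry

/-- The angle opposite the side `a` in a triangle with sides `a`, `b`, `c`, by the law of cosines.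
When no such triangle exists the truncation built into `arccos` gives `π` if `a` is too long and
`0` if `b` or `c` is. -/
noncomputable def triangleAngle (a b c : ℝ) : ℝ :=
  arccos ((b ^ 2 + c ^ 2 - a ^ 2) / (2 * b * c))

lemma triangleAngle_swap (a b c : ℝ) : triangleAngle a b c = triangleAngle a c b := by
  simp only [triangleAngle, add_comm (b ^ 2), mul_right_comm _ b]

lemma triangleAngle_nonneg (a b c : ℝ) : 0 ≤ triangleAngle a b c :=
  arccos_nonneg _

lemma triangleAngle_eq_pi {a b c : ℝ} (hb : 0 < b) (hc : 0 < c) (h : b + c ≤ a) :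
    triangleAngle a b c = π := by
  refine arccos_of_le_neg_one ?_
  rw [div_le_iff₀ (by positivity)]
  nlinarith

lemma triangleAngle_eq_zero {a b c : ℝ} (ha : 0 < a) (hb : 0 < b) (hc : 0 < c) (h : a + c ≤ b) :
    triangleAngle a b c = 0 := by
  refine arccos_of_one_le ?_
  rw [le_div_iff₀ (by positivity)]
  nlinarith

lemma angle_eq_triangleAngle {V : Type*} [NormedAddCommGroup V] [InnerProductSpace ℝ V]
    (x y : V) : angle x y = triangleAngle ‖x - y‖ ‖x‖ ‖y‖ := by
  rw [angle, triangleAngle, norm_sub_sq_real, mul_assoc 2, ← mul_div_mul_left _ _ two_ne_zero]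
  ring_nf

lemma exists_norm_eq_norm_eq_norm_sub_eq {a b c : ℝ} (ha : 0 < a) (hb : 0 < b) (hc : 0 < c)
    (habc : a ≤ b + c) (hbca : b ≤ c + a) (hcab : c ≤ a + b) :
    ∃ x y : ℂ, ‖x‖ = b ∧ ‖y‖ = c ∧ ‖x - y‖ = a := by
  set t := (b ^ 2 + c ^ 2 - a ^ 2) / (2 * b * c) with ht
  have ht_lower : -1 ≤ t := by rw [le_div_iff₀ (by positivity)]; nlinarith
  have ht_upper : t ≤ 1 := by rw [div_le_iff₀ (by positivity)]; nlinarith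
  have hnorm : ‖(c : ℂ) * Circle.exp (arccos t)‖ = c := by simp [hc.le]
  refine ⟨b, c * Circle.exp (arccos t), by simp [hb.le], hnorm, ?_⟩
  rw [← sq_eq_sq₀ (norm_nonneg _) ha.le, norm_sub_sq_real, hnorm]
  have hinner : inner ℝ (b : ℂ) (c * Circle.exp (arccos t)) = b * c * t := by
    rw [Complex.inner, Complex.conj_ofReal, Circle.coe_exp, Complex.re_mul_ofReal,
      Complex.re_ofReal_mul, Complex.exp_ofReal_mul_I_re, cos_arccos ht_lower ht_upper]
    ring
  rw [hinner, ht, Complex.norm_of_nonneg hb.le]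
  field_simp
  ring

theorem triangleAngle_add_triangleAngle_add_triangleAngle_eq_pi {a b c : ℝ}
    (ha : 0 < a) (hb : 0 < b) (hc : 0 < c) :
    triangleAngle a b c + triangleAngle b c a + triangleAngle c a b = π := by
  rcases le_total (b + c) a with habc | habc
  · rw [triangleAngle_eq_pi hb hc habc, triangleAngle_swap b, triangleAngle_eq_zero hb ha hc habc,
      triangleAngle_eq_zero hc ha hb (by linarith)]
    ring
  rcases le_total (c + a) b with hbca | hbca
  · rw [triangleAngle_eq_pi hc ha hbca, triangleAngle_swap c, triangleAngle_eq_zero hc hb ha hbca,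
      triangleAngle_eq_zero ha hb hc (by linarith)]
    ring
  rcases le_total (a + b) c with hcab | hcab
  · rw [triangleAngle_eq_pi ha hb hcab, triangleAngle_swap a, triangleAngle_eq_zero ha hc hb hcab,
      triangleAngle_eq_zero hb hc ha (by linarith)]
    ring
  obtain ⟨x, y, rfl, rfl, rfl⟩ := exists_norm_eq_norm_eq_norm_sub_eq ha hb hc habc hbca hcab
  have hangles := angle_add_angle_sub_add_angle_sub_eq_pi x (norm_pos_iff.1 hc)
  simp only [angle_eq_triangleAngle, sub_sub_cancel, norm_sub_rev y x] at hangles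
  linarith [triangleAngle_swap ‖x‖ ‖y‖ ‖x - y‖, triangleAngle_swap ‖y‖ ‖x‖ ‖x - y‖]

end Triangle

section Averaging

open Function

-- Integrate the preimage of `S` under the joint map over `U ⊗ m` in both orders.
theorem measure_eq_lintegral_of_measurePreserving {Θ Ω : Type*} [MeasurableSpace Θ]
    [MeasurableSpace Ω] (U : Measure Θ) [IsProbabilityMeasure U] {m : Measure Ω} [SFinite m]
    {T : Θ → Ω → Ω} (hT : Measurable (uncurry T)) (hTm : ∀ θ, MeasurePreserving (T θ) m m)
    {S : Set Ω} (hS : MeasurableSet S) :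
    m S = ∫⁻ ω, U {θ | T θ ω ∈ S} ∂m := by
  calc m S = ∫⁻ θ, m (T θ ⁻¹' S) ∂U := by
        simp [fun θ => (hTm θ).measure_preimage hS.nullMeasurableSet]
    _ = (U.prod m) (uncurry T ⁻¹' S) := (Measure.prod_apply (hT hS)).symm
    _ = ∫⁻ ω, U {θ | T θ ω ∈ S} ∂m := Measure.prod_apply_symm (hT hS)

end Averaging

section UniformAngle

open Real AddCircle

local instance : Fact (0 < 2 * π) := ⟨two_pi_pos⟩

/-- The uniform probability measure on angles modulo `2π`. -/
noncomputable abbrev uniformAngle : Measure (AddCircle (2 * π)) :=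
  haarAddCircle

lemma measurePreserving_coe_uniformAngle (t : ℝ) :
    MeasurePreserving (fun θ : ℝ => (θ : AddCircle (2 * π)))
      ((ENNReal.ofReal (2 * π))⁻¹ • volume.restrict (Set.Ioc t (t + 2 * π))) uniformAngle := by
  have hpi : ENNReal.ofReal (2 * π) ≠ 0 := (ENNReal.ofReal_pos.2 two_pi_pos).ne'
  have h := (AddCircle.measurePreserving_mk (2 * π) t).smul_measure (ENNReal.ofReal (2 * π))⁻¹
  rwa [volume_eq_smul_haarAddCircle, smul_smul, ENNReal.inv_mul_cancel hpi ENNReal.ofReal_ne_top,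
    one_smul] at h

lemma toCircle_coe_two_pi (θ : ℝ) : toCircle (θ : AddCircle (2 * π)) = Circle.exp θ := by
  rw [toCircle_apply_mk, div_self two_pi_pos.ne', one_mul]

lemma re_toCircle_coe (θ : ℝ) : (toCircle (θ : AddCircle (2 * π)) : ℂ).re = cos θ := by
  rw [toCircle_coe_two_pi, Circle.coe_exp, Complex.exp_ofReal_mul_I_re]

lemma measurable_re_toCircle :
    Measurable fun x : AddCircle (2 * π) => (toCircle x : ℂ).re :=
  (Complex.continuous_re.comp (continuous_subtype_val.comp continuous_toCircle)).measurable

lemma uniformAngle_re_toCircle_mem {S : Set ℝ} (hS : MeasurableSet S) :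
    uniformAngle {x | (toCircle x : ℂ).re ∈ S} =
      (ENNReal.ofReal (2 * π))⁻¹ * volume {θ | cos θ ∈ S ∧ θ ∈ Set.Ioc (-π) π} := by
  have hcoe := measurePreserving_coe_uniformAngle (-π)
  have hS' : MeasurableSet {x : AddCircle (2 * π) | (toCircle x : ℂ).re ∈ S} :=
    measurable_re_toCircle hS
  have hpre : (fun θ : ℝ => (θ : AddCircle (2 * π))) ⁻¹' {x | (toCircle x : ℂ).re ∈ S} =
      {θ | cos θ ∈ S} := by
    ext θ
    simp only [Set.mem_preimage, Set.mem_ofPred_eq, re_toCircle_coe]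
  rw [← hcoe.measure_preimage hS'.nullMeasurableSet, Measure.smul_apply, smul_eq_mul,
    Measure.restrict_apply (hcoe.measurable hS'), hpre, show -π + 2 * π = π by ring]
  rfl

lemma lt_cos_iff_abs_lt_arccos {θ t : ℝ} (hθ : |θ| < π) : t < cos θ ↔ |θ| < arccos t := by
  rw [← cos_abs θ]
  refine ⟨fun h => ?_, fun h => ?_⟩
  · rcases lt_or_ge t (-1) with ht | ht
    · rwa [arccos_of_le_neg_one ht.le]
    · simpa only [arccos_cos (abs_nonneg θ) hθ.le] using arccos_lt_arccos ht h (cos_le_one _)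
  · by_contra! hle
    exact h.not_ge ((arccos_le_arccos hle).trans_eq (arccos_cos (abs_nonneg θ) hθ.le))

lemma uniformAngle_lt_re_toCircle (t : ℝ) :
    uniformAngle {x | t < (toCircle x : ℂ).re} = ENNReal.ofReal (arccos t / π) := by
  have hvol : volume {θ | cos θ ∈ Set.Ioi t ∧ θ ∈ Set.Ioc (-π) π} =
      volume (Set.Ioo (-arccos t) (arccos t)) := by
    refine measure_congr ?_
    filter_upwards [Measure.ae_ne volume π] with θ hθ
    refine propext ⟨fun ⟨hcos, hlow, hup⟩ => ?_, fun h => ?_⟩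
    · exact abs_lt.1 ((lt_cos_iff_abs_lt_arccos (abs_lt.2 ⟨hlow, hup.lt_of_ne hθ⟩)).1 hcos)
    · have hlt : |θ| < π := (abs_lt.2 h).trans_le (arccos_le_pi t)
      exact ⟨(lt_cos_iff_abs_lt_arccos hlt).2 (abs_lt.2 h), (abs_lt.1 hlt).1, (abs_lt.1 hlt).2.le⟩
  change uniformAngle {x | (toCircle x : ℂ).re ∈ Set.Ioi t} = _
  rw [uniformAngle_re_toCircle_mem measurableSet_Ioi, hvol, volume_Ioo,
    ← ENNReal.ofReal_inv_of_pos two_pi_pos, ← ENNReal.ofReal_mul (by positivity)]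
  congr 1
  field_simp
  ring

lemma uniformAngle_re_toCircle_eq (t : ℝ) :
    uniformAngle {x | (toCircle x : ℂ).re = t} = 0 := by
  have hsub : {θ | cos θ ∈ ({t} : Set ℝ) ∧ θ ∈ Set.Ioc (-π) π} ⊆ {arccos t, -arccos t} := by
    rintro θ ⟨rfl, hlow, hup⟩
    rw [← cos_abs, arccos_cos (abs_nonneg θ) (abs_le.2 ⟨hlow.le, hup⟩)]
    rcases abs_choice θ with h | h <;> simp [h]
  change uniformAngle {x | (toCircle x : ℂ).re ∈ ({t} : Set ℝ)} = 0
  rw [uniformAngle_re_toCircle_mem (measurableSet_singleton t),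
    measure_mono_null hsub ((Set.toFinite _).measure_zero _), mul_zero]

lemma exists_toCircle_mul_norm_eq (z : ℂ) :
    ∃ x : AddCircle (2 * π), (toCircle x : ℂ) * ‖z‖ = z := by
  refine ⟨(z.arg : ℝ), ?_⟩
  rw [toCircle_coe_two_pi, Circle.coe_exp, mul_comm, Complex.norm_mul_exp_arg_mul_I]

-- The angle `x + δ` is the one between `toCircle x • y` and `-z`.
lemma exists_forall_norm_toCircle_smul_add_sq (y z : ℂ) :
    ∃ δ : AddCircle (2 * π), ∀ x, ‖toCircle x • y + z‖ ^ 2 =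
      ‖y‖ ^ 2 + ‖z‖ ^ 2 - 2 * ‖y‖ * ‖z‖ * (toCircle (x + δ) : ℂ).re := by
  obtain ⟨v, hv⟩ := exists_toCircle_mul_norm_eq y
  obtain ⟨w, hw⟩ := exists_toCircle_mul_norm_eq (-z)
  refine ⟨v - w, fun x => ?_⟩
  have hinner : inner ℝ (-z) (toCircle x • y) = ‖y‖ * ‖z‖ * (toCircle (x + (v - w)) : ℂ).re := by
    conv_lhs => rw [← hw, ← hv]
    rw [← Complex.re_ofReal_mul, Complex.inner, norm_neg]
    congr 1
    simp only [Circle.smul_def, smul_eq_mul, sub_eq_add_neg, toCircle_add, toCircle_neg,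
      Circle.coe_mul, Circle.coe_inv_eq_conj, map_mul, Complex.conj_ofReal, Complex.ofReal_mul]
    ring
  rw [← sub_neg_eq_add, norm_sub_sq_real, real_inner_comm, hinner, Circle.norm_smul, norm_neg]
  ring

lemma uniformAngle_norm_toCircle_smul_add_lt {a : ℝ} (ha : 0 < a) {y z : ℂ} (hy : y ≠ 0)
    (hz : z ≠ 0) :
    uniformAngle {x | ‖toCircle x • y + z‖ < a} =
      ENNReal.ofReal (triangleAngle a ‖y‖ ‖z‖ / π) := by
  obtain ⟨δ, hδ⟩ := exists_forall_norm_toCircle_smul_add_sq y z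
  have hyz : 0 < 2 * ‖y‖ * ‖z‖ := by positivity
  rw [triangleAngle, ← uniformAngle_lt_re_toCircle,
    ← measure_preimage_add_right uniformAngle δ {x | _ < (toCircle x : ℂ).re}]
  congr 1
  ext x
  rw [Set.mem_ofPred_eq, ← sq_lt_sq₀ (norm_nonneg _) ha.le, hδ, Set.mem_preimage,
    Set.mem_ofPred_eq, div_lt_iff₀ hyz]
  constructor <;> intro h <;> linarith

lemma uniformAngle_norm_toCircle_smul_add_eq (a : ℝ) {y z : ℂ} (hy : y ≠ 0) (hz : z ≠ 0) :
    uniformAngle {x | ‖toCircle x • y + z‖ = a} = 0 := by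
  obtain ⟨δ, hδ⟩ := exists_forall_norm_toCircle_smul_add_sq y z
  have hyz : 0 < 2 * ‖y‖ * ‖z‖ := by positivity
  refine measure_mono_null ?_ ((measure_preimage_add_right uniformAngle δ _).trans
    (uniformAngle_re_toCircle_eq ((‖y‖ ^ 2 + ‖z‖ ^ 2 - a ^ 2) / (2 * ‖y‖ * ‖z‖))))
  rintro x rfl
  rw [Set.mem_preimage, Set.mem_ofPred_eq, eq_div_iff hyz.ne', hδ]
  ring

end UniformAngle

section ProbLonger

variable {E : Type*} [NormedAddCommGroup E] [MeasurableSpace E]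

/-- The probability that a vector of law `α` is strictly longer than an independent vector of
law `β`. -/
noncomputable def probLonger (α β : Measure E) : ℝ≥0∞ :=
  (α.prod β) {q | ‖q.2‖ < ‖q.1‖}

variable [OpensMeasurableSpace E]

lemma measurableSet_norm_snd_lt_norm_fst : MeasurableSet {q : E × E | ‖q.2‖ < ‖q.1‖} :=
  measurableSet_lt measurable_snd.norm measurable_fst.norm

lemma probLonger_dirac_zero (β : Measure E) [SFinite β] : probLonger (Measure.dirac 0) β = 0 := by
  have hempty : {z : E | ‖z‖ < ‖(0 : E)‖} = ∅ := by
    simp only [norm_zero, (norm_nonneg _).not_gt, Set.ofPred_false]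
  rw [probLonger, Measure.prod_apply measurableSet_norm_snd_lt_norm_fst, lintegral_dirac]
  exact (congrArg β hempty).trans measure_empty

lemma probLonger_add_probLonger_swap {α β : Measure E} [IsProbabilityMeasure α]
    [IsProbabilityMeasure β] (hβ : ∀ c, β {z | ‖z‖ = c} = 0) :
    probLonger α β + probLonger β α = 1 := by
  have hlt : MeasurableSet {q : E × E | ‖q.1‖ < ‖q.2‖} :=
    measurableSet_lt measurable_fst.norm measurable_snd.norm
  have hswap : probLonger β α = (α.prod β) {q | ‖q.1‖ < ‖q.2‖} :=
    ((Measure.measurePreserving_swap (μ := α) (ν := β)).measure_preimage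
      measurableSet_norm_snd_lt_norm_fst.nullMeasurableSet).symm
  have hties : (α.prod β) {q | ‖q.2‖ = ‖q.1‖} = 0 := by
    rw [Measure.measure_prod_null (measurableSet_eq_fun measurable_snd.norm measurable_fst.norm)]
    exact Filter.Eventually.of_forall fun x => hβ ‖x‖
  have hdisj : Disjoint {q : E × E | ‖q.2‖ < ‖q.1‖} {q | ‖q.1‖ < ‖q.2‖} :=
    Set.disjoint_left.2 fun q h h' => lt_asymm (α := ℝ) h h'
  rw [hswap, probLonger, ← measure_union hdisj hlt, ← prob_compl_eq_zero_iff
    (measurableSet_norm_snd_lt_norm_fst.union hlt)]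
  refine measure_mono_null (fun q hq => ?_) hties
  rw [← Set.ofPred_or, Set.mem_compl_iff, Set.mem_ofPred_eq, not_or, not_lt, not_lt] at hq
  exact le_antisymm hq.2 hq.1

end ProbLonger

section RotationInvariant

open Real AddCircle

lemma measurable_toCircle_smul_prod {E : Type*} [MeasurableSpace E] :
    Measurable fun p : AddCircle (2 * π) × ℂ × E => (toCircle p.1 • p.2.1, p.2.2) := by
  have hsmul : Measurable fun p : AddCircle (2 * π) × ℂ => toCircle p.1 • p.2 :=
    ((continuous_toCircle.comp continuous_fst).smul continuous_snd).measurable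
  exact (hsmul.comp (measurable_fst.prodMk (measurable_fst.comp measurable_snd))).prodMk
    (measurable_snd.comp measurable_snd)

lemma measurePreserving_toCircle_smul_prod {E : Type*} [MeasurableSpace E] (β : Measure ℂ)
    (γ : Measure E) [SFinite β] [SFinite γ] [SMulInvariantMeasure Circle ℂ β]
    (x : AddCircle (2 * π)) :
    MeasurePreserving (fun q : ℂ × E => (toCircle x • q.1, q.2)) (β.prod γ) (β.prod γ) :=
  (measurePreserving_smul (toCircle x) β).prod (MeasurePreserving.id γ)

lemma ae_prod_ne_zero {E : Type*} [Zero E] [MeasurableSpace E] {β γ : Measure E}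
    (hβ : β {0} = 0) (hγ : γ {0} = 0) : ∀ᵐ q ∂β.prod γ, q.1 ≠ 0 ∧ q.2 ≠ 0 := by
  have hβ' : ∀ᵐ z ∂β, z ≠ 0 := measure_eq_zero_iff_ae_notMem.1 hβ
  have hγ' : ∀ᵐ z ∂γ, z ≠ 0 := measure_eq_zero_iff_ae_notMem.1 hγ
  exact (Measure.quasiMeasurePreserving_fst.ae hβ').and
    (Measure.quasiMeasurePreserving_snd.ae hγ')

theorem conv_setOf_norm_eq_eq_zero {β γ : Measure ℂ} [SFinite β] [SFinite γ]
    [SMulInvariantMeasure Circle ℂ β] (hβ : β {0} = 0) (hγ : γ {0} = 0) (c : ℝ) :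
    (β ∗ γ) {z | ‖z‖ = c} = 0 := by
  have hS : MeasurableSet {q : ℂ × ℂ | ‖q.1 + q.2‖ = c} :=
    measurableSet_eq_fun (measurable_fst.add measurable_snd).norm measurable_const
  calc (β ∗ γ) {z | ‖z‖ = c} = (β.prod γ) {q | ‖q.1 + q.2‖ = c} :=
        Measure.map_apply measurable_add (measurableSet_eq_fun measurable_norm measurable_const)
    _ = ∫⁻ q, uniformAngle {x | ‖toCircle x • q.1 + q.2‖ = c} ∂β.prod γ :=
        measure_eq_lintegral_of_measurePreserving uniformAngle measurable_toCircle_smul_prod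
          (measurePreserving_toCircle_smul_prod β γ) hS
    _ = ∫⁻ _, 0 ∂β.prod γ := by
        refine lintegral_congr_ae ?_
        filter_upwards [ae_prod_ne_zero hβ hγ] with q hq
        exact uniformAngle_norm_toCircle_smul_add_eq c hq.1 hq.2
    _ = 0 := lintegral_zero

theorem conv_setOf_norm_lt {β γ : Measure ℂ} [SFinite β] [SFinite γ]
    [SMulInvariantMeasure Circle ℂ β] (hβ : β {0} = 0) (hγ : γ {0} = 0) {a : ℝ} (ha : 0 < a) :
    (β ∗ γ) {z | ‖z‖ < a} =
      ∫⁻ q, ENNReal.ofReal (triangleAngle a ‖q.1‖ ‖q.2‖ / π) ∂β.prod γ := by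
  have hS : MeasurableSet {q : ℂ × ℂ | ‖q.1 + q.2‖ < a} :=
    measurableSet_lt (measurable_fst.add measurable_snd).norm measurable_const
  calc (β ∗ γ) {z | ‖z‖ < a} = (β.prod γ) {q | ‖q.1 + q.2‖ < a} :=
        Measure.map_apply measurable_add (measurableSet_lt measurable_norm measurable_const)
    _ = ∫⁻ q, uniformAngle {x | ‖toCircle x • q.1 + q.2‖ < a} ∂β.prod γ :=
        measure_eq_lintegral_of_measurePreserving uniformAngle measurable_toCircle_smul_prod
          (measurePreserving_toCircle_smul_prod β γ) hS
    _ = ∫⁻ q, ENNReal.ofReal (triangleAngle a ‖q.1‖ ‖q.2‖ / π) ∂β.prod γ := by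
        refine lintegral_congr_ae ?_
        filter_upwards [ae_prod_ne_zero hβ hγ] with q hq
        exact uniformAngle_norm_toCircle_smul_add_lt ha hq.1 hq.2

lemma measurable_ofReal_triangleAngle_norm_div_pi :
    Measurable fun q : ℂ × ℂ × ℂ =>
      ENNReal.ofReal (triangleAngle ‖q.1‖ ‖q.2.1‖ ‖q.2.2‖ / π) :=
  ((continuous_arccos.measurable.comp (by fun_prop)).div_const π).ennreal_ofReal

theorem probLonger_conv {α β γ : Measure ℂ} [SFinite β] [SFinite γ]
    [SMulInvariantMeasure Circle ℂ β] (hα : α {0} = 0) (hβ : β {0} = 0) (hγ : γ {0} = 0) :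
    probLonger α (β ∗ γ) =
      ∫⁻ q, ENNReal.ofReal (triangleAngle ‖q.1‖ ‖q.2.1‖ ‖q.2.2‖ / π) ∂α.prod (β.prod γ) := by
  rw [probLonger, Measure.prod_apply measurableSet_norm_snd_lt_norm_fst,
    lintegral_prod _ measurable_ofReal_triangleAngle_norm_div_pi.aemeasurable]
  refine lintegral_congr_ae ?_
  filter_upwards [measure_eq_zero_iff_ae_notMem.1 hα] with x hx
  exact conv_setOf_norm_lt hβ hγ (norm_pos_iff.2 hx)

lemma ofReal_triangleAngle_div_pi_add {a b c : ℝ} (ha : 0 < a) (hb : 0 < b) (hc : 0 < c) :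
    ENNReal.ofReal (triangleAngle a b c / π) + ENNReal.ofReal (triangleAngle b c a / π) +
      ENNReal.ofReal (triangleAngle c a b / π) = 1 := by
  have hnonneg (a b c : ℝ) : 0 ≤ triangleAngle a b c / π :=
    div_nonneg (triangleAngle_nonneg a b c) pi_pos.le
  rw [← ENNReal.ofReal_add (hnonneg a b c) (hnonneg b c a),
    ← ENNReal.ofReal_add (add_nonneg (hnonneg a b c) (hnonneg b c a)) (hnonneg c a b),
    ← add_div, ← add_div, triangleAngle_add_triangleAngle_add_triangleAngle_eq_pi ha hb hc,
    div_self pi_ne_zero, ENNReal.ofReal_one]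

lemma measurePreserving_prod_rotate {E : Type*} [MeasurableSpace E] (α β γ : Measure E)
    [SFinite α] [SFinite β] [SFinite γ] :
    MeasurePreserving (fun q : E × E × E => (q.2.1, q.2.2, q.1)) (α.prod (β.prod γ))
      (β.prod (γ.prod α)) :=
  (measurePreserving_prodAssoc β γ α).comp Measure.measurePreserving_swap

theorem probLonger_conv_add_probLonger_conv_add_probLonger_conv {α β γ : Measure ℂ}
    [IsProbabilityMeasure α] [IsProbabilityMeasure β] [IsProbabilityMeasure γ]
    [SMulInvariantMeasure Circle ℂ α] [SMulInvariantMeasure Circle ℂ β]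
    [SMulInvariantMeasure Circle ℂ γ] (hα : α {0} = 0) (hβ : β {0} = 0) (hγ : γ {0} = 0) :
    probLonger α (β ∗ γ) + probLonger β (γ ∗ α) + probLonger γ (α ∗ β) = 1 := by
  let angle (q : ℂ × ℂ × ℂ) : ℝ≥0∞ :=
    ENNReal.ofReal (triangleAngle ‖q.1‖ ‖q.2.1‖ ‖q.2.2‖ / π)
  let rotate (q : ℂ × ℂ × ℂ) : ℂ × ℂ × ℂ := (q.2.1, q.2.2, q.1)
  have hangle : Measurable angle := measurable_ofReal_triangleAngle_norm_div_pi
  have hrot : MeasurePreserving rotate (α.prod (β.prod γ)) (β.prod (γ.prod α)) :=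
    measurePreserving_prod_rotate α β γ
  have hrot_rot : MeasurePreserving (rotate ∘ rotate) (α.prod (β.prod γ)) (γ.prod (α.prod β)) :=
    (measurePreserving_prod_rotate β γ α).comp hrot
  have hsum : ∀ᵐ q ∂α.prod (β.prod γ),
      angle q + angle (rotate q) + angle (rotate (rotate q)) = 1 := by
    filter_upwards [Measure.quasiMeasurePreserving_fst.ae (measure_eq_zero_iff_ae_notMem.1 hα),
      Measure.quasiMeasurePreserving_snd.ae (ae_prod_ne_zero hβ hγ)]
      with q hx hyz
    exact ofReal_triangleAngle_div_pi_add (norm_pos_iff.2 hx) (norm_pos_iff.2 hyz.1)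
      (norm_pos_iff.2 hyz.2)
  calc probLonger α (β ∗ γ) + probLonger β (γ ∗ α) + probLonger γ (α ∗ β)
      = ∫⁻ q, angle q ∂α.prod (β.prod γ) + ∫⁻ q, angle q ∂β.prod (γ.prod α) +
          ∫⁻ q, angle q ∂γ.prod (α.prod β) := by
        rw [probLonger_conv hα hβ hγ, probLonger_conv hβ hγ hα, probLonger_conv hγ hα hβ]
    _ = ∫⁻ q, (angle q + angle (rotate q) + angle (rotate (rotate q))) ∂α.prod (β.prod γ) := by
        rw [← hrot.lintegral_comp hangle, ← hrot_rot.lintegral_comp hangle,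
          ← lintegral_add_left hangle]
        exact (lintegral_add_left (hangle.add (hangle.comp hrot.measurable)) _).symm
    _ = 1 := by rw [lintegral_congr_ae hsum, lintegral_one, measure_univ]

end RotationInvariant

section ConvPow

variable {M : Type*} [AddMonoid M] [MeasurableSpace M]

/-- The `n`-fold convolution power of `ν`, the law of the sum of `n` independent variables of
law `ν`. -/
noncomputable def convPow (ν : Measure M) : ℕ → Measure M
  | 0 => Measure.dirac 0
  | n + 1 => ν ∗ convPow ν n

variable [MeasurableAdd₂ M] (ν : Measure M) [IsProbabilityMeasure ν]

instance isProbabilityMeasure_convPow (n : ℕ) : IsProbabilityMeasure (convPow ν n) := by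
  induction n with
  | zero => exact Measure.dirac.isProbabilityMeasure
  | succ n ih => exact Measure.probabilitymeasure_of_probabilitymeasures_conv ν (convPow ν n)

lemma convPow_add (m n : ℕ) : convPow ν (m + n) = convPow ν m ∗ convPow ν n := by
  induction m with
  | zero => rw [Nat.zero_add, convPow, Measure.dirac_zero_conv]
  | succ m ih => rw [Nat.succ_add, convPow, convPow, ih, Measure.conv_assoc]

instance smulInvariantMeasure_convPow {G : Type*} [Monoid G] [DistribMulAction G M]
    [MeasurableConstSMul G M] [SMulInvariantMeasure G M ν] (n : ℕ) :
    SMulInvariantMeasure G M (convPow ν n) := by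
  have hmap (g : G) : (convPow ν n).map (g • ·) = convPow ν n := by
    have hg : Measurable (DistribSMul.toAddMonoidHom M g) := measurable_const_smul g
    change (convPow ν n).map (DistribSMul.toAddMonoidHom M g) = convPow ν n
    induction n with
    | zero => rw [convPow, Measure.map_dirac' hg, map_zero]
    | succ n ih =>
      rw [convPow, Measure.map_conv_addMonoidHom _ hg, ih]
      congr 1
      exact (measurePreserving_smul g ν).map_eq
  refine ⟨fun g S hS => ?_⟩
  rw [← Measure.map_apply (measurable_const_smul g) hS, hmap]

end ConvPow

lemma measurePreserving_sum_convPow {M : Type*} [AddCommMonoid M] [MeasurableSpace M]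
    [MeasurableAdd₂ M] (ν : Measure M) [IsProbabilityMeasure ν] (n : ℕ) :
    MeasurePreserving (fun w : Fin n → M => ∑ i, w i) (Measure.pi fun _ => ν) (convPow ν n) := by
  induction n with
  | zero => exact ⟨by fun_prop, by simp [convPow]⟩
  | succ n ih =>
    have hadd : MeasurePreserving (fun q : M × M => q.1 + q.2) (ν.prod (convPow ν n))
        (convPow ν (n + 1)) := ⟨measurable_add, rfl⟩
    have hcons := measurePreserving_piFinSuccAbove (fun _ : Fin (n + 1) => ν) 0
    convert (hadd.comp ((MeasurePreserving.id ν).prod ih)).comp hcons using 1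
    funext w
    exact Fin.sum_univ_succ w

section RotationInvariantConvPow

variable {ν : Measure ℂ} [IsProbabilityMeasure ν] [SMulInvariantMeasure Circle ℂ ν]

lemma convPow_succ_singleton_zero (hν : ν {0} = 0) (n : ℕ) : convPow ν (n + 1) {0} = 0 := by
  induction n with
  | zero => rwa [convPow, convPow, Measure.conv_dirac_zero]
  | succ n ih =>
    rw [convPow, ← conv_setOf_norm_eq_eq_zero hν ih 0]
    simp only [norm_eq_zero, Set.ofPred_eq_eq_singleton]

lemma convPow_setOf_norm_eq_eq_zero (hν : ν {0} = 0) {n : ℕ} (hn : 2 ≤ n) (c : ℝ) :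
    convPow ν n {z | ‖z‖ = c} = 0 := by
  obtain ⟨m, rfl⟩ := Nat.exists_eq_add_of_le' hn
  exact conv_setOf_norm_eq_eq_zero hν (convPow_succ_singleton_zero hν m) c

lemma probLonger_convPow_add_swap (hν : ν {0} = 0) {m n : ℕ} (hmn : 2 < m + n) :
    probLonger (convPow ν m) (convPow ν n) + probLonger (convPow ν n) (convPow ν m) = 1 := by
  rcases le_or_gt 2 n with hn | hn
  · exact probLonger_add_probLonger_swap (convPow_setOf_norm_eq_eq_zero hν hn)
  · rw [add_comm]
    exact probLonger_add_probLonger_swap (convPow_setOf_norm_eq_eq_zero hν (by lia))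

theorem probLonger_convPow_add_add (hν : ν {0} = 0) {i j k : ℕ} (hijk : 2 < i + j + k) :
    probLonger (convPow ν i) (convPow ν (j + k)) + probLonger (convPow ν j) (convPow ν (k + i)) +
      probLonger (convPow ν k) (convPow ν (i + j)) = 1 := by
  rcases i with _ | i
  · rw [convPow, probLonger_dirac_zero, zero_add, zero_add, add_zero]
    exact probLonger_convPow_add_swap hν (by lia)
  rcases j with _ | j
  · rw [convPow, probLonger_dirac_zero, zero_add, add_zero, add_zero]
    exact probLonger_convPow_add_swap hν (by lia)
  rcases k with _ | k
  · rw [convPow, probLonger_dirac_zero, zero_add, add_zero, add_zero]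
    exact probLonger_convPow_add_swap hν (by lia)
  rw [convPow_add ν (j + 1), convPow_add ν (k + 1), convPow_add ν (i + 1)]
  exact probLonger_conv_add_probLonger_conv_add_probLonger_conv
    (convPow_succ_singleton_zero hν i) (convPow_succ_singleton_zero hν j)
    (convPow_succ_singleton_zero hν k)

theorem probLonger_convPow_add_probLonger_convPow (hν : ν {0} = 0) {i j k : ℕ}
    (hijk : 2 < i + j + k) :
    probLonger (convPow ν i) (convPow ν (j + k)) + probLonger (convPow ν j) (convPow ν (k + i)) =
      probLonger (convPow ν (i + j)) (convPow ν k) := by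
  have hne_top : probLonger (convPow ν k) (convPow ν (i + j)) ≠ ∞ := measure_ne_top _ _
  rw [← ENNReal.add_left_inj hne_top, probLonger_convPow_add_add hν hijk,
    probLonger_convPow_add_swap hν hijk]

end RotationInvariantConvPow

section Walk

open Real AddCircle

/-- The law in `ℂ` of one step of the walk: a random length of law `μ` times an independent
uniform direction. -/
noncomputable def stepLaw (μ : Measure ℝ) : Measure ℂ :=
  (μ.prod uniformAngle).map fun p => p.1 • (toCircle p.2 : ℂ)

lemma measurable_smul_toCircle :
    Measurable fun p : ℝ × AddCircle (2 * π) => p.1 • (toCircle p.2 : ℂ) :=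
  (continuous_fst.smul (continuous_subtype_val.comp
    (continuous_toCircle.comp continuous_snd))).measurable

instance isProbabilityMeasure_stepLaw (μ : Measure ℝ) [IsProbabilityMeasure μ] :
    IsProbabilityMeasure (stepLaw μ) :=
  Measure.isProbabilityMeasure_map measurable_smul_toCircle.aemeasurable

lemma stepLaw_singleton_zero (μ : Measure ℝ) : stepLaw μ {0} = μ {0} := by
  have hpre : (fun p : ℝ × AddCircle (2 * π) => p.1 • (toCircle p.2 : ℂ)) ⁻¹' {0} =
      {0} ×ˢ Set.univ := by
    ext p
    simp
  rw [stepLaw, Measure.map_apply measurable_smul_toCircle (measurableSet_singleton 0), hpre,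
    Measure.prod_prod, measure_univ, mul_one]

instance smulInvariantMeasure_stepLaw (μ : Measure ℝ) [SFinite μ] :
    SMulInvariantMeasure Circle ℂ (stepLaw μ) := by
  refine ⟨fun u S hS => ?_⟩
  obtain ⟨a, ha⟩ := exists_toCircle_mul_norm_eq u
  have hrot : MeasurePreserving (Prod.map id (a + ·)) (μ.prod uniformAngle)
      (μ.prod uniformAngle) :=
    (MeasurePreserving.id μ).prod (measurePreserving_add_left uniformAngle a)
  have hmap : (u • ·) ∘ (fun p : ℝ × AddCircle (2 * π) => p.1 • (toCircle p.2 : ℂ)) =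
      (fun p => p.1 • (toCircle p.2 : ℂ)) ∘ Prod.map id (a + ·) := by
    funext p
    simp only [Circle.norm_coe, Complex.ofReal_one, mul_one] at ha
    simp only [Function.comp_apply, Prod.map_fst, Prod.map_snd, id_eq, Circle.smul_def, smul_eq_mul,
      toCircle_add, Circle.coe_mul, ha, mul_smul_comm]
  rw [← Measure.map_apply (measurable_const_smul u) hS, stepLaw,
    Measure.map_map (measurable_const_smul u) measurable_smul_toCircle, hmap,
    ← Measure.map_map measurable_smul_toCircle hrot.measurable, hrot.map_eq]

lemma measurePreserving_repr_toCircle :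
    MeasurePreserving (fun x : AddCircle (2 * π) => Complex.orthonormalBasisOneI.repr (toCircle x))
      uniformAngle uniformCircle := by
  have hmeas : Measurable fun x : AddCircle (2 * π) =>
      Complex.orthonormalBasisOneI.repr (toCircle x) :=
    (Complex.orthonormalBasisOneI.repr.continuous.comp
      (continuous_subtype_val.comp continuous_toCircle)).measurable
  refine ⟨hmeas, ?_⟩
  have hcoe := measurePreserving_coe_uniformAngle 0
  rw [zero_add] at hcoe
  rw [← hcoe.map_eq, Measure.map_map hmeas hcoe.measurable, uniformCircle]
  congr 1
  funext θ
  ext l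
  fin_cases l
  · simp [stepVec, toCircle_coe_two_pi, Complex.exp_ofReal_mul_I_re]
  · simp [stepVec, toCircle_coe_two_pi, Complex.exp_ofReal_mul_I_im]

instance isProbabilityMeasure_uniformCircle : IsProbabilityMeasure uniformCircle :=
  measurePreserving_repr_toCircle.map_eq ▸
    Measure.isProbabilityMeasure_map measurePreserving_repr_toCircle.measurable.aemeasurable

lemma measurePreserving_repr_symm_smul_stepLaw (μ : Measure ℝ) [SFinite μ] :
    MeasurePreserving
      (fun p : ℝ × EuclideanSpace ℝ (Fin 2) => Complex.orthonormalBasisOneI.repr.symm (p.1 • p.2))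
      (μ.prod uniformCircle) (stepLaw μ) := by
  have hprod : MeasurePreserving (Prod.map id fun x : AddCircle (2 * π) =>
      Complex.orthonormalBasisOneI.repr (toCircle x)) (μ.prod uniformAngle)
      (μ.prod uniformCircle) :=
    (MeasurePreserving.id μ).prod measurePreserving_repr_toCircle
  have hmeas : Measurable fun p : ℝ × EuclideanSpace ℝ (Fin 2) =>
      Complex.orthonormalBasisOneI.repr.symm (p.1 • p.2) :=
    Complex.orthonormalBasisOneI.repr.symm.continuous.measurable.comp (by fun_prop)
  refine ⟨hmeas, ?_⟩
  rw [← hprod.map_eq, Measure.map_map hmeas hprod.measurable, stepLaw]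
  congr 1
  funext p
  simp only [Function.comp_apply, Prod.map_fst, Prod.map_snd, id_eq, map_smul,
    LinearIsometryEquiv.symm_apply_apply]

theorem walkDist_eq_map_norm_convPow_stepLaw (μ : Measure ℝ) [IsProbabilityMeasure μ] (n : ℕ) :
    walkDist μ n = (convPow (stepLaw μ) n).map norm := by
  have hpairs := measurePreserving_arrowProdEquivProdArrow ℝ (EuclideanSpace ℝ (Fin 2)) (Fin n)
    (fun _ => μ) (fun _ => uniformCircle)
  have hsteps := measurePreserving_pi (fun _ : Fin n => μ.prod uniformCircle) _
    (fun _ => measurePreserving_repr_symm_smul_stepLaw μ)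
  have hsum := (measurePreserving_sum_convPow (stepLaw μ) n).comp hsteps
  rw [walkDist, ← hpairs.map_eq, ← hsum.map_eq, Measure.map_map (by fun_prop) (by fun_prop),
    Measure.map_map measurable_norm hsum.measurable]
  congr 1
  funext w
  have hnorm := Complex.orthonormalBasisOneI.repr.symm.norm_map (∑ i, (w i).1 • (w i).2)
  rw [map_sum] at hnorm
  exact hnorm.symm

lemma walkDist_prod_walkDist_setOf_lt (μ : Measure ℝ) [IsProbabilityMeasure μ] (m n : ℕ) :
    ((walkDist μ m).prod (walkDist μ n)) {q | q.2 < q.1} =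
      probLonger (convPow (stepLaw μ) m) (convPow (stepLaw μ) n) := by
  rw [walkDist_eq_map_norm_convPow_stepLaw, walkDist_eq_map_norm_convPow_stepLaw,
    Measure.map_prod_map _ _ measurable_norm measurable_norm,
    Measure.map_apply (measurable_norm.prodMap measurable_norm)
      (measurableSet_lt measurable_snd measurable_fst)]
  rfl

end Walk

theorem stmt_6_general (μ : Measure ℝ) [IsProbabilityMeasure μ] (hμ : μ {0} = 0)
    (s : ℕ) (hs : 2 < s) (p : ℕ → ℝ≥0∞)
    (hp : ∀ i ≤ s, p i = ((walkDist μ i).prod (walkDist μ (s - i))) {q : ℝ × ℝ | q.2 < q.1})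
    (i j : ℕ) (hij : i + j ≤ s) :
    p i + p j = p (i + j) := by
  obtain ⟨k, rfl⟩ := Nat.exists_eq_add_of_le hij
  rw [hp i (by lia), hp j (by lia), hp (i + j) hij, walkDist_prod_walkDist_setOf_lt,
    walkDist_prod_walkDist_setOf_lt, walkDist_prod_walkDist_setOf_lt,
    show i + j + k - i = j + k by lia, show i + j + k - j = k + i by lia,
    Nat.add_sub_cancel_left]
  exact probLonger_convPow_add_probLonger_convPow ((stepLaw_singleton_zero μ).trans hμ) hs

theorem stmt_6 {Ω : Type*} [MeasurableSpace Ω] (P : Measure Ω) [IsProbabilityMeasure P]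
    (X : Ω → ℝ) (hX : Measurable X) (hXpos : ∀ ω, 0 < X ω)
    (s : ℕ) (hs : 2 < s) (p : ℕ → ℝ≥0∞)
    (hp : ∀ i ≤ s, p i =
      ((walkDist (Measure.map X P) i).prod (walkDist (Measure.map X P) (s - i)))
        {q : ℝ × ℝ | q.2 < q.1})
    (i j : ℕ) (hi : 0 < i) (hj : 0 < j) (hij : i + j ≤ s) :
    p i + p j = p (i + j) := by
  have hprob := Measure.isProbabilityMeasure_map (μ := P) hX.aemeasurable
  have hzero : P.map X {0} = 0 := by
    rw [Measure.map_apply hX (measurableSet_singleton 0)]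
    exact measure_mono_null (fun ω hω => (hXpos ω).ne' hω) measure_empty
  exact stmt_6_general (P.map X) hzero s hs p hp i j hij
end
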